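/- Let n ≥ 3 and let ω be a skew-symmetric bilinear form on V such that the kernel of the convolution operator Q_ω on ⋀^{n-1}V is exactly equal to H_V (the span of the concordance vectors, regarded inside ⋀^{n-1}V). Then there exists a nonzero real number a such that ω = a·Λ_{2n-2}, i.e. ω(v_i, v_{i+1}) = a·(−1)^{i+1} for 1 ≤ i ≤ 2n−3 and ω(v_i, v_j) = 0 whenever |i−j| ≠ 1. -/

import Mathlib

open scoped Classical

noncomputable section

/-- `P` is a set partition of the finite ground set `G` (of integers): its blocks are nonempty
subsets of `G`, and every element of `G` lies in exactly one block. -/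
def IsPartitionOf (G : Finset ℕ) (P : Finset (Finset ℕ)) : Prop :=
  (∀ B ∈ P, B.Nonempty) ∧ (∀ B ∈ P, B ⊆ G) ∧ ∀ x ∈ G, ∃! B, B ∈ P ∧ x ∈ B

/-- A collection of blocks is non-crossing: there are no `a < b < c < d` with `a, c` in one
block and `b, d` in a different block. -/
def NonCrossing (P : Finset (Finset ℕ)) : Prop :=
  ∀ a b c d : ℕ, a < b → b < c → c < d →
    ∀ B₁ ∈ P, ∀ B₂ ∈ P, a ∈ B₁ → c ∈ B₁ → b ∈ B₂ → d ∈ B₂ → B₁ = B₂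

/-- The set `{1, 3, …, 2n-1}` of "barred" boundary indices `k̄ = 2k-1`. -/
def oddSet (n : ℕ) : Finset ℕ := (Finset.range n).image fun k => 2 * k + 1

/-- The set `{2, 4, …, 2n}` of "tilde" boundary indices `k̃ = 2k`. -/
def evenSet (n : ℕ) : Finset ℕ := (Finset.range n).image fun k => 2 * k + 2

/-- `σ` is a non-crossing partition of `{1̄,…,n̄}` and `σd` is its dual: a non-crossing
partition of `{1̃,…,ñ}` such that the merged partition `σ ∪ σd` is non-crossing and the
numbers of blocks add up to `n + 1`. -/
def IsNCPair (n : ℕ) (σ σd : Finset (Finset ℕ)) : Prop :=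
  IsPartitionOf (oddSet n) σ ∧ NonCrossing σ ∧
    IsPartitionOf (evenSet n) σd ∧ NonCrossing σd ∧
    NonCrossing (σ ∪ σd) ∧ σ.card + σd.card = n + 1

/-- An `(n-1)`-element subset `I ⊆ {1,…,2n}` is concordant with `σ` if every block of `σ`
and every block of the dual `σd` contains exactly one element not in `I`. -/
def ConcordantWith (σ σd : Finset (Finset ℕ)) (I : Finset ℕ) : Prop :=
  ∀ B ∈ σ ∪ σd, (B \ I).card = 1

/-- `stdE n i` is the `i`-th standard basis vector (1-indexed) of `ℝ^{2n}`. -/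
def stdE (n i : ℕ) : Fin (2 * n) → ℝ := fun t => if (t : ℕ) + 1 = i then 1 else 0

/-- The wedge `e_{i_1} ∧ … ∧ e_{i_k}` over the increasing enumeration `i_1 < … < i_k`
of a finite set `I` of (1-indexed) indices. -/
def finsetWedge (n k : ℕ) (I : Finset ℕ) : ExteriorAlgebra ℝ (Fin (2 * n) → ℝ) :=
  ExteriorAlgebra.ιMulti ℝ k fun p => stdE n ((I.sort (· ≤ ·)).getD p.val 0)

/-- The concordance vector `w_σ = Σ_I e_I ∈ ⋀^{n-1} ℝ^{2n}`, the sum over all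
`(n-1)`-element subsets `I` of `{1,…,2n}` concordant with `σ`. -/
def concVec (n : ℕ) (σ σd : Finset (Finset ℕ)) : ExteriorAlgebra ℝ (Fin (2 * n) → ℝ) :=
  ∑ I ∈ ((Finset.Icc 1 (2 * n)).powersetCard (n - 1)).filter (ConcordantWith σ σd),
    finsetWedge n (n - 1) I

end
noncomputable section

/-- The subspace `V = {v ∈ ℝ^{2n} : Σ_{i=1}^n (-1)^i v_{2i} = 0, Σ_{i=1}^n (-1)^i v_{2i-1} = 0}`. -/
def Vsub (n : ℕ) : Submodule ℝ (Fin (2 * n) → ℝ) :=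
  LinearMap.ker (∑ k : Fin n, ((-1 : ℝ)) ^ (k.val + 1) •
      (LinearMap.proj (⟨2 * k.val + 1, by have := k.isLt; omega⟩ : Fin (2 * n)) :
        (Fin (2 * n) → ℝ) →ₗ[ℝ] ℝ)) ⊓
  LinearMap.ker (∑ k : Fin n, ((-1 : ℝ)) ^ (k.val + 1) •
      (LinearMap.proj (⟨2 * k.val, by have := k.isLt; omega⟩ : Fin (2 * n)) :
        (Fin (2 * n) → ℝ) →ₗ[ℝ] ℝ))

/-- The basis vectors `v_k = e_k + e_{k+2}`, `k = 1, …, 2n-2`, of the subspace `V`. -/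
def vVec (n k : ℕ) : Fin (2 * n) → ℝ := stdE n k + stdE n (k + 2)

/-- The wedge `x_1 ∧ … ∧ x_k` of vectors of a module, as an element of the `k`-th exterior
power (a submodule of the exterior algebra). -/
def wedgeIn (k : ℕ) {M : Type*} [AddCommGroup M] [Module ℝ M] (x : Fin k → M) :
    ↥(⋀[ℝ]^k M) :=
  ⟨ExteriorAlgebra.ιMulti ℝ k x, ExteriorAlgebra.ιMulti_range ℝ k (Set.mem_range_self x)⟩

/-- The subspace `H_V ⊆ ⋀^{n-1} V`: the span of the preimages in `⋀^{n-1} V` of the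
concordance vectors `w_σ ∈ ⋀^{n-1} ℝ^{2n}` under the map induced by the inclusion `V ⊆ ℝ^{2n}`. -/
def HV (n : ℕ) : Submodule ℝ ↥(⋀[ℝ]^(n - 1) ↥(Vsub n)) :=
  Submodule.span ℝ {y | ∃ σ σd : Finset (Finset ℕ), IsNCPair n σ σd ∧
    ExteriorAlgebra.map ((Vsub n).subtype) (y : ExteriorAlgebra ℝ ↥(Vsub n)) = concVec n σ σd}

end

/-!
If `ω` is alternating and a nonzero decomposable vector `x₁ ∧ … ∧ xₙ₋₁` lies in the kernel of `Q_ω`,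
then `ω(x_p, x_q) = 0` for all `p, q`: multiplying `Q_ω(x₁ ∧ … ∧ xₙ₋₁)` by `x_p ∧ x_q` leaves
`± ω(x_p, x_q) x₁ ∧ … ∧ xₙ₋₁`. If the only blocks of `σ` and its dual that may have
more than one element are `{1, 3, …, 2k-1}` and `{2k, 2k+2, …, 2n}`, or `{p, p+2}` and
`{…, p-3, p-1, p+3, p+5, …}`, then the concordance vector is decomposable in `⋀ⁿ⁻¹ V`. These
vectors force `ω(v_i, v_j) = 0` for `|i - j| ≥ 2` and `ω(v_p, v_{p+1}) = ω(v_p, v_{p-1})`, that is,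
`ω = a Λ` with `a = ω(v₁, v₂)`.

If `a` were `0`, every wedge of the `v_i` would lie in `H_V`. But on `H_V` the coefficients of
`e_I` and `e_J` agree for `I = {4} ∪ {5, 7, …, 2n-1}` and `J = {2} ∪ {1, 7, 9, …, 2n-1}`, because
concordance with either set forces `1, 5` to share a block and `2, 4` to share a block, by
non-crossing; on `v₄ ∧ v₃ ∧ v₅ ∧ … ∧ v_{2n-3}` these coefficients are `1` and `0`.
-/

section ListWedge

open ExteriorAlgebra (ι ιMulti)

variable (R : Type*) {M N : Type*} [CommRing R] [AddCommGroup M] [Module R M]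
  [AddCommGroup N] [Module R N]

/-- The wedge `x₁ ∧ … ∧ xₖ` of the entries of a list. Lists make erasing, splitting and
concatenating families of vectors painless, unlike families indexed by `Fin k`. -/
noncomputable def listWedge (l : List M) : ExteriorAlgebra R M := (l.map (ι R)).prod

@[simp]
lemma listWedge_nil : listWedge R ([] : List M) = 1 := rfl

@[simp]
lemma listWedge_cons (a : M) (l : List M) : listWedge R (a :: l) = ι R a * listWedge R l := by
  simp [listWedge]

lemma listWedge_append (l l' : List M) :
    listWedge R (l ++ l') = listWedge R l * listWedge R l' := by
  simp [listWedge]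

lemma listWedge_ofFn {k : ℕ} (x : Fin k → M) : listWedge R (List.ofFn x) = ιMulti R k x := by
  simp [listWedge, ExteriorAlgebra.ιMulti_apply, List.map_ofFn, Function.comp_def]

lemma map_listWedge (f : M →ₗ[R] N) (l : List M) :
    ExteriorAlgebra.map f (listWedge R l) = listWedge R (l.map f) := by
  simp [listWedge, map_list_prod, Function.comp_def]

lemma ι_mul_ι_swap (a b : M) : ι R a * ι R b = -(ι R b * ι R a) :=
  eq_neg_of_add_eq_zero_left (ExteriorAlgebra.ι_add_mul_swap a b)

variable {R}

lemma listWedge_eq_or_eq_neg_of_perm {l l' : List M} (h : l.Perm l') :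
    listWedge R l = listWedge R l' ∨ listWedge R l = -listWedge R l' := by
  induction h with
  | nil => simp
  | cons x _ ih => rcases ih with ih | ih <;> simp [ih]
  | swap x y l => simp [← mul_assoc, ι_mul_ι_swap R x y]
  | trans _ _ ih₁ ih₂ =>
    rcases ih₁ with ih₁ | ih₁ <;> rcases ih₂ with ih₂ | ih₂ <;> simp [ih₁, ih₂]

lemma listWedge_ne_zero_of_perm {l l' : List M} (h : l.Perm l') (hl : listWedge R l ≠ 0) :
    listWedge R l' ≠ 0 := by
  rcases listWedge_eq_or_eq_neg_of_perm (R := R) h with h | h <;> simpa [h] using hl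

lemma listWedge_eq_zero_of_not_nodup {l : List M} (h : ¬l.Nodup) : listWedge R l = 0 := by
  rw [← List.ofFn_get l, listWedge_ofFn]
  exact AlternatingMap.map_eq_zero_of_not_injective _ _ (mt List.nodup_iff_injective_get.mpr h)

end ListWedge

section Convolution

open ExteriorAlgebra (ι ιMulti)

lemma getElem_mem_eraseIdx_eraseIdx {α : Type*} {l : List α} {i p q : ℕ} (hi : i < l.length)
    (hpq : p < q) (hp : i ≠ p) (hq : i ≠ q) : l[i] ∈ (l.eraseIdx q).eraseIdx p := by
  rw [List.mem_eraseIdx_iff_getElem]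
  rcases lt_or_gt_of_ne hq with h | h
  · exact ⟨i, by grind, hp, by grind⟩
  · exact ⟨i - 1, by grind, by grind, by grind⟩

lemma cons_cons_eraseIdx_eraseIdx_perm {α : Type*} {l : List α} {p q : ℕ} (hpq : p < q)
    (hq : q < l.length) : (l[p] :: l[q] :: (l.eraseIdx q).eraseIdx p).Perm l := by
  have hp : p < (l.eraseIdx q).length := by grind
  have hget : (l.eraseIdx q)[p] = l[p] := by grind
  have restore_p : (l[p] :: (l.eraseIdx q).eraseIdx p).Perm (l.eraseIdx q) :=
    hget ▸ List.getElem_cons_eraseIdx_perm hp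
  exact (List.Perm.swap _ _ _).trans ((restore_p.cons _).trans (List.getElem_cons_eraseIdx_perm hq))

variable {R M : Type*} [CommRing R] [AddCommGroup M] [Module R M]

/-- The convolution `Q_ω(x₁ ∧ … ∧ xₖ)` of a family of vectors with a bilinear form `ω`, as an
element of the exterior algebra; with `Fin k` starting at `0` the sign `(-1)^(p+q-1)` of the
1-indexed formula becomes `(-1)^(p+q+1)`. -/
noncomputable def convolve (ω : M →ₗ[R] M →ₗ[R] R) {k : ℕ} (x : Fin k → M) :
    ExteriorAlgebra R M :=
  ∑ p : Fin k, ∑ q : Fin k,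
    if p < q then
      ((-1) ^ (p.val + q.val + 1) * ω (x p) (x q)) •
        listWedge R (((List.ofFn x).eraseIdx q.val).eraseIdx p.val)
    else 0

lemma listWedge_cons_cons_eraseIdx_eraseIdx_eq_zero {k : ℕ} (x : Fin k → M) {p q p' q' : Fin k}
    (hpq : p < q) (hpq' : p' < q') (hne : p' ≠ p ∨ q' ≠ q) :
    listWedge R (x p :: x q :: ((List.ofFn x).eraseIdx q'.val).eraseIdx p'.val) = 0 := by
  have remains (i : Fin k) (hp : i ≠ p') (hq : i ≠ q') :
      x i ∈ ((List.ofFn x).eraseIdx q'.val).eraseIdx p'.val := by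
    simpa using getElem_mem_eraseIdx_eraseIdx (l := List.ofFn x) (i := i) (by simp) hpq'
      (Fin.val_ne_of_ne hp) (Fin.val_ne_of_ne hq)
  have repeated : x p ∈ ((List.ofFn x).eraseIdx q'.val).eraseIdx p'.val ∨
      x q ∈ ((List.ofFn x).eraseIdx q'.val).eraseIdx p'.val := by
    by_cases hp : p ≠ p' ∧ p ≠ q'
    · exact .inl (remains p hp.1 hp.2)
    · exact .inr (remains q (by grind) (by grind))
  apply listWedge_eq_zero_of_not_nodup
  simp only [List.nodup_cons, List.mem_cons]
  tauto

/-- Multiplying by `x p ∧ x q` kills every other term of the convolution, because each of them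
still contains `x p` or `x q`. -/
lemma ι_mul_ι_mul_convolve (ω : M →ₗ[R] M →ₗ[R] R) {k : ℕ} (x : Fin k → M) {p q : Fin k}
    (hpq : p < q) :
    ι R (x p) * (ι R (x q) * convolve ω x) =
      ((-1) ^ (p.val + q.val + 1) * ω (x p) (x q)) •
        listWedge R (x p :: x q :: ((List.ofFn x).eraseIdx q.val).eraseIdx p.val) := by
  have vanish (p' q' : Fin k) (hne : p' ≠ p ∨ q' ≠ q) :
      ι R (x p) * (ι R (x q) * if p' < q' then
        ((-1) ^ (p'.val + q'.val + 1) * ω (x p') (x q')) •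
          listWedge R (((List.ofFn x).eraseIdx q'.val).eraseIdx p'.val) else 0) = 0 := by
    split_ifs with h
    · simp only [mul_smul_comm, ← listWedge_cons]
      rw [listWedge_cons_cons_eraseIdx_eraseIdx_eq_zero x hpq h hne, smul_zero]
    · simp
  simp only [convolve, Finset.mul_sum]
  rw [Finset.sum_eq_single p (fun p' _ hp => Finset.sum_eq_zero fun q' _ => vanish p' q' (.inl hp))
    (by simp), Finset.sum_eq_single q (fun q' _ hq => vanish p q' (.inr hq)) (by simp), if_pos hpq]
  simp only [mul_smul_comm, ← listWedge_cons]

lemma form_eq_zero_of_convolve_eq_zero {K V : Type*} [Field K] [AddCommGroup V] [Module K V]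
    {ω : V →ₗ[K] V →ₗ[K] K} (hω : ω.IsAlt) {k : ℕ} {x : Fin k → V} (hx : ιMulti K k x ≠ 0)
    (hconv : convolve ω x = 0) (p q : Fin k) : ω (x p) (x q) = 0 := by
  have of_lt {p q : Fin k} (hpq : p < q) : ω (x p) (x q) = 0 := by
    have hperm := cons_cons_eraseIdx_eraseIdx_perm (l := List.ofFn x) hpq (by simp)
    have hwedge := listWedge_ne_zero_of_perm (R := K) hperm.symm (by rwa [listWedge_ofFn])
    have hsingle := ι_mul_ι_mul_convolve ω x hpq
    rw [hconv, mul_zero, mul_zero, eq_comm, smul_eq_zero] at hsingle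
    simpa using hsingle.resolve_right (by simpa using hwedge)
  rcases lt_trichotomy p q with h | rfl | h
  · exact of_lt h
  · exact hω (x p)
  · rw [← hω.neg, of_lt h, neg_zero]

end Convolution

section ConvolutionOperator

variable {M : Type*} [AddCommGroup M] [Module ℝ M]

lemma ofFn_getD {α : Type*} {k : ℕ} {l : List α} (hl : l.length = k) (d : α) :
    List.ofFn (fun r : Fin k => l.getD r.val d) = l := by
  subst hl
  simp

lemma coe_wedgeIn_getD {k : ℕ} {l : List M} (hl : l.length = k) :
    (wedgeIn k (fun r : Fin k => l.getD r.val 0) : ExteriorAlgebra ℝ M) = listWedge ℝ l := by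
  change ExteriorAlgebra.ιMulti ℝ k _ = _
  rw [← listWedge_ofFn, ofFn_getD hl]

/-- `Q` is the convolution operator `Q_ω : ⋀^k M → ⋀^j M`, which lowers the degree by two. -/
def IsConvolutionOperator {k j : ℕ} (ω : M →ₗ[ℝ] M →ₗ[ℝ] ℝ) (Q : ⋀[ℝ]^k M →ₗ[ℝ] ⋀[ℝ]^j M) :
    Prop :=
  ∀ x : Fin k → M, Q (wedgeIn k x) =
    ∑ p : Fin k, ∑ q : Fin k,
      if p < q then
        ((-1 : ℝ) ^ (p.val + q.val + 1) * ω (x p) (x q)) •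
          wedgeIn j (fun r : Fin j => (((List.ofFn x).eraseIdx q.val).eraseIdx p.val).getD r.val 0)
      else 0

namespace IsConvolutionOperator

variable {k j : ℕ} {ω : M →ₗ[ℝ] M →ₗ[ℝ] ℝ} {Q : ⋀[ℝ]^k M →ₗ[ℝ] ⋀[ℝ]^j M}

lemma coe_apply_wedgeIn (hQ : IsConvolutionOperator ω Q) (hkj : k = j + 2) (x : Fin k → M) :
    (Q (wedgeIn k x) : ExteriorAlgebra ℝ M) = convolve ω x := by
  rw [hQ x, convolve, AddSubmonoidClass.coe_finsetSum]
  refine Finset.sum_congr rfl fun p _ => ?_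
  rw [AddSubmonoidClass.coe_finsetSum]
  refine Finset.sum_congr rfl fun q _ => ?_
  split_ifs with hpq
  · have hlen : (((List.ofFn x).eraseIdx q.val).eraseIdx p.val).length = j := by
      grind
    rw [Submodule.coe_smul, coe_wedgeIn_getD hlen]
  · rfl

lemma form_eq_zero (hQ : IsConvolutionOperator ω Q) (hkj : k = j + 2) (hω : ω.IsAlt) {l : List M}
    (hl : l.length = k) (hl₀ : listWedge ℝ l ≠ 0)
    (hker : wedgeIn k (fun r => l.getD r.val 0) ∈ LinearMap.ker Q) {a b : M} (ha : a ∈ l)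
    (hb : b ∈ l) : ω a b = 0 := by
  have hconv : convolve ω (fun r : Fin k => l.getD r.val 0) = 0 := by
    rw [← hQ.coe_apply_wedgeIn hkj, LinearMap.mem_ker.mp hker, ZeroMemClass.coe_zero]
  have hentry (c : M) (hc : c ∈ l) : ∃ r : Fin k, l.getD r.val 0 = c := by
    obtain ⟨i, hi, rfl⟩ := List.mem_iff_getElem.mp hc
    exact ⟨⟨i, hl ▸ hi⟩, List.getD_eq_getElem _ _ hi⟩
  obtain ⟨p, rfl⟩ := hentry a ha
  obtain ⟨q, rfl⟩ := hentry b hb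
  exact form_eq_zero_of_convolve_eq_zero hω (by rwa [← listWedge_ofFn, ofFn_getD hl]) hconv p q

lemma wedgeIn_mem_ker (hQ : IsConvolutionOperator ω Q) {x : Fin k → M}
    (hx : ∀ p q, ω (x p) (x q) = 0) : wedgeIn k x ∈ LinearMap.ker Q := by
  simp [hQ x, hx]

end IsConvolutionOperator

end ConvolutionOperator

section PathWedge

open ExteriorAlgebra (ι)

variable (R : Type*) {M : Type*} [CommRing R] [AddCommGroup M] [Module R M]

/-- The wedge `(x₁ + x₂) ∧ (x₂ + x₃) ∧ … ∧ (xₖ₋₁ + xₖ)` of the sums of consecutive entries of a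
list. For a list of length `k` this has degree `k - 1`; the value at `[]` is `0`, so that
`sum_listWedge_erase` holds without exception. -/
noncomputable def pathWedge : List M → ExteriorAlgebra R M
  | [] => 0
  | [_] => 1
  | a :: b :: l => ι R (a + b) * pathWedge (b :: l)

lemma listWedge_cons_eq_ι_mul_pathWedge (a : M) (l : List M) :
    listWedge R (a :: l) = ι R a * pathWedge R (a :: l) := by
  induction l generalizing a with
  | nil => simp [pathWedge]
  | cons b l ih =>
    rw [listWedge_cons, ih b, pathWedge, map_add, add_mul, mul_add, ← mul_assoc (ι R a) (ι R a),
      ExteriorAlgebra.ι_sq_zero, zero_mul, zero_add]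

lemma listWedge_concat_eq_pathWedge_mul_ι (l : List M) (x : M) :
    listWedge R (l ++ [x]) = pathWedge R (l ++ [x]) * ι R x := by
  induction l with
  | nil => simp [pathWedge]
  | cons a l ih =>
    cases l with
    | nil => simp [pathWedge, add_mul]
    | cons b l =>
      simp only [List.cons_append, pathWedge, mul_assoc] at ih ⊢
      rw [← ih, map_add, add_mul, listWedge_cons, listWedge_cons, ← mul_assoc (ι R b),
        ExteriorAlgebra.ι_sq_zero, zero_mul, add_zero]

lemma sum_listWedge_erase {α : Type*} [DecidableEq α] (f : α → M) {l : List α} (hl : l.Nodup) :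
    ∑ a ∈ l.toFinset, listWedge R ((l.erase a).map f) = pathWedge R (l.map f) := by
  induction l with
  | nil => simp [pathWedge]
  | cons a l ih =>
    obtain ⟨ha, hl⟩ := List.nodup_cons.mp hl
    have htail : ∑ b ∈ l.toFinset, listWedge R (((a :: l).erase b).map f) =
        ι R (f a) * pathWedge R (l.map f) := by
      rw [← ih hl, Finset.mul_sum]
      refine Finset.sum_congr rfl fun b hb => ?_
      have hab : a ≠ b := by rintro rfl; exact ha (List.mem_toFinset.mp hb)
      rw [List.erase_cons_tail (by simpa using hab), List.map_cons, listWedge_cons]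
    rw [List.toFinset_cons, Finset.sum_insert (by simpa using ha), List.erase_cons_head, htail]
    cases l with
    | nil => simp [pathWedge]
    | cons b l =>
      rw [List.map_cons, listWedge_cons_eq_ι_mul_pathWedge, List.map_cons, List.map_cons,
        pathWedge, map_add, add_mul, add_comm]

end PathWedge

section Coordinates

variable {n k : ℕ} {I J : Finset ℕ}

lemma stdE_dotProduct_stdE {i : ℕ} (hi : i ∈ Finset.Icc 1 (2 * n)) (j : ℕ) :
    stdE n i ⬝ᵥ stdE n j = if i = j then 1 else 0 := by
  have ⟨h₁, h₂⟩ := Finset.mem_Icc.mp hi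
  rw [dotProduct, Finset.sum_eq_single ⟨i - 1, by omega⟩]
  · simp [stdE, Nat.sub_add_cancel h₁]
  · intro t _ ht
    have : (t : ℕ) + 1 ≠ i := by rintro rfl; exact ht (by ext; simp)
    simp [stdE, this]
  · simp

lemma getD_sort_mem (hI : I.card = k) (q : Fin k) : (I.sort (· ≤ ·)).getD q.val 0 ∈ I := by
  have hq : q.val < (I.sort (· ≤ ·)).length := by simp [hI]
  rw [List.getD_eq_getElem _ _ hq]
  exact (Finset.mem_sort _).mp (List.getElem_mem hq)

lemma exists_getD_sort_eq (hI : I.card = k) {i : ℕ} (hi : i ∈ I) :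
    ∃ p : Fin k, (I.sort (· ≤ ·)).getD p.val 0 = i := by
  obtain ⟨p, hp, rfl⟩ := List.mem_iff_getElem.mp ((Finset.mem_sort (· ≤ ·)).mpr hi)
  exact ⟨⟨p, by simpa [hI] using hp⟩, List.getD_eq_getElem _ _ hp⟩

lemma getD_sort_inj (hI : I.card = k) {p q : Fin k} :
    (I.sort (· ≤ ·)).getD p.val 0 = (I.sort (· ≤ ·)).getD q.val 0 ↔ p = q := by
  rw [List.getD_eq_getElem _ _ (by simp [hI]), List.getD_eq_getElem _ _ (by simp [hI]),
    (Finset.sort_nodup I (· ≤ ·)).getElem_inj_iff, Fin.ext_iff]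

/-- The linear functional on the exterior algebra of `ℝ^{2n}` reading off the coefficient of `e_I`,
where `k` is the cardinality of `I`. -/
noncomputable def wedgeCoord (n k : ℕ) (I : Finset ℕ) :
    ExteriorAlgebra ℝ (Fin (2 * n) → ℝ) →ₗ[ℝ] ℝ :=
  ExteriorAlgebra.liftAlternating (Pi.single k
    (Matrix.detRowAlternating.compLinearMap
      (LinearMap.pi fun q : Fin k => dotProductBilin ℝ ℝ (stdE n ((I.sort (· ≤ ·)).getD q.val 0)))))

lemma wedgeCoord_ιMulti (I : Finset ℕ) (x : Fin k → Fin (2 * n) → ℝ) :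
    wedgeCoord n k I (ExteriorAlgebra.ιMulti ℝ k x) =
      (Matrix.of fun p q : Fin k => stdE n ((I.sort (· ≤ ·)).getD q.val 0) ⬝ᵥ x p).det := by
  rw [wedgeCoord, ExteriorAlgebra.liftAlternating_apply_ιMulti, Pi.single_eq_same]
  rfl

lemma wedgeCoord_finsetWedge (hI : I ⊆ Finset.Icc 1 (2 * n)) (hIk : I.card = k)
    (hJk : J.card = k) : wedgeCoord n k I (finsetWedge n k J) = if J = I then 1 else 0 := by
  have hentry (q : Fin k) (j : ℕ) := stdE_dotProduct_stdE (hI (getD_sort_mem hIk q)) j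
  rw [finsetWedge, wedgeCoord_ιMulti]
  simp only [hentry]
  split_ifs with h
  · subst h
    convert Matrix.det_one (n := Fin k) (R := ℝ) using 2
    ext p q
    simp only [Matrix.of_apply, Matrix.one_apply, getD_sort_inj hIk, eq_comm]
  · have hsub : ¬J ⊆ I := fun hs => h (Finset.eq_of_subset_of_card_le hs (by omega))
    obtain ⟨j, hj, hjI⟩ := Finset.not_subset.mp hsub
    obtain ⟨p, rfl⟩ := exists_getD_sort_eq hJk hj
    refine Matrix.det_eq_zero_of_row_eq_zero p fun q => if_neg ?_
    exact fun hq => hjI (hq ▸ getD_sort_mem hIk q)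

lemma wedgeCoord_concVec (σ σd : Finset (Finset ℕ))
    (hI : I ∈ (Finset.Icc 1 (2 * n)).powersetCard (n - 1)) :
    wedgeCoord n (n - 1) I (concVec n σ σd) = if ConcordantWith σ σd I then 1 else 0 := by
  obtain ⟨hIsub, hIcard⟩ := Finset.mem_powersetCard.mp hI
  have hterm : ∀ J ∈ ((Finset.Icc 1 (2 * n)).powersetCard (n - 1)).filter (ConcordantWith σ σd),
      wedgeCoord n (n - 1) I (finsetWedge n (n - 1) J) = if J = I then 1 else 0 := fun J hJ =>
    wedgeCoord_finsetWedge hIsub hIcard (Finset.mem_powersetCard.mp (Finset.mem_filter.mp hJ).1).2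
  rw [concVec, map_sum, Finset.sum_congr rfl hterm, Finset.sum_ite_eq']
  simp [hI]

lemma concVec_ne_zero {σ σd : Finset (Finset ℕ)}
    (hI : I ∈ (Finset.Icc 1 (2 * n)).powersetCard (n - 1)) (hconc : ConcordantWith σ σd I) :
    concVec n σ σd ≠ 0 := by
  intro h
  simpa [h, hconc] using wedgeCoord_concVec σ σd hI

end Coordinates

section TwoBlocks

variable {n : ℕ} {G H A B I : Finset ℕ}

lemma mem_oddSet {x : ℕ} : x ∈ oddSet n ↔ x % 2 = 1 ∧ x ∈ Finset.Icc 1 (2 * n) := by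
  simp only [oddSet, Finset.mem_image, Finset.mem_range, Finset.mem_Icc]
  constructor
  · rintro ⟨k, hk, rfl⟩
    omega
  · exact fun h => ⟨x / 2, by omega, by omega⟩

lemma mem_evenSet {x : ℕ} : x ∈ evenSet n ↔ x % 2 = 0 ∧ x ∈ Finset.Icc 1 (2 * n) := by
  simp only [evenSet, Finset.mem_image, Finset.mem_range, Finset.mem_Icc]
  constructor
  · rintro ⟨k, hk, rfl⟩
    omega
  · exact fun h => ⟨x / 2 - 1, by omega, by omega⟩

lemma card_oddSet : (oddSet n).card = n := by
  rw [oddSet, Finset.card_image_of_injective _ fun a b h => by simpa using h, Finset.card_range]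

lemma card_evenSet : (evenSet n).card = n := by
  rw [evenSet, Finset.card_image_of_injective _ fun a b h => by simpa using h, Finset.card_range]

lemma disjoint_oddSet_evenSet : Disjoint (oddSet n) (evenSet n) := by
  rw [Finset.disjoint_left]
  intro x hodd heven
  have := (mem_oddSet.mp hodd).1
  have := (mem_evenSet.mp heven).1
  omega

lemma oddSet_union_evenSet : oddSet n ∪ evenSet n = Finset.Icc 1 (2 * n) := by
  ext x
  rw [Finset.mem_union, mem_oddSet, mem_evenSet]
  have := Nat.mod_two_eq_zero_or_one x
  tauto

lemma NonCrossing.mono {P Q : Finset (Finset ℕ)} (h : NonCrossing Q) (hPQ : P ⊆ Q) :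
    NonCrossing P :=
  fun a b c d hab hbc hcd B₁ hB₁ B₂ hB₂ =>
    h a b c d hab hbc hcd B₁ (hPQ hB₁) B₂ (hPQ hB₂)

/-- The partition of `G` whose blocks are `A` and the singletons of `G \ A`. -/
noncomputable def oneBlock (G A : Finset ℕ) : Finset (Finset ℕ) :=
  insert A ((G \ A).image fun x => {x})

lemma mem_oneBlock {C : Finset ℕ} : C ∈ oneBlock G A ↔ C = A ∨ ∃ x ∈ G \ A, C = {x} := by
  simp only [oneBlock, Finset.mem_insert, Finset.mem_image, eq_comm]

lemma isPartitionOf_oneBlock (hA : A ⊆ G) (hA₀ : A.Nonempty) : IsPartitionOf G (oneBlock G A) := by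
  refine ⟨fun C hC => ?_, fun C hC => ?_, fun x hx => ?_⟩
  · rcases mem_oneBlock.mp hC with rfl | ⟨x, _, rfl⟩
    · exact hA₀
    · exact Finset.singleton_nonempty x
  · rcases mem_oneBlock.mp hC with rfl | ⟨x, hx, rfl⟩
    · exact hA
    · simpa using (Finset.mem_sdiff.mp hx).1
  · refine ⟨if x ∈ A then A else {x}, ?_, ?_⟩ <;> grind [mem_oneBlock]

lemma card_oneBlock_add_card (hA : A ⊆ G) : (oneBlock G A).card + A.card = G.card + 1 := by
  have hnotMem : A ∉ (G \ A).image fun x => ({x} : Finset ℕ) := by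
    simp only [Finset.mem_image, Finset.mem_sdiff, not_exists, not_and]
    rintro x ⟨_, hx⟩ rfl
    exact hx (Finset.mem_singleton_self x)
  rw [oneBlock, Finset.card_insert_of_notMem hnotMem,
    Finset.card_image_of_injective _ Finset.singleton_injective, Finset.card_sdiff_of_subset hA]
  have := Finset.card_le_card hA
  omega

lemma nonCrossing_oneBlock_union_oneBlock (h : NonCrossing {A, B}) :
    NonCrossing (oneBlock G A ∪ oneBlock H B) := by
  have large_block {C : Finset ℕ} (hC : C ∈ oneBlock G A ∪ oneBlock H B) {x y : ℕ} (hx : x ∈ C)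
      (hy : y ∈ C) (hxy : x < y) : C ∈ ({A, B} : Finset (Finset ℕ)) := by
    rcases Finset.mem_union.mp hC with hC | hC <;>
      rcases mem_oneBlock.mp hC with rfl | ⟨z, _, rfl⟩ <;> grind
  intro a b c d hab hbc hcd B₁ hB₁ B₂ hB₂ ha hc hb hd
  exact h a b c d hab hbc hcd B₁ (large_block hB₁ ha hc (hab.trans hbc))
    B₂ (large_block hB₂ hb hd (hbc.trans hcd)) ha hc hb hd

lemma isNCPair_oneBlock (hA : A ⊆ oddSet n) (hB : B ⊆ evenSet n) (hA₀ : A.Nonempty)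
    (hB₀ : B.Nonempty) (hcard : A.card + B.card = n + 1) (hnc : NonCrossing {A, B}) :
    IsNCPair n (oneBlock (oddSet n) A) (oneBlock (evenSet n) B) := by
  have hunion : NonCrossing (oneBlock (oddSet n) A ∪ oneBlock (evenSet n) B) :=
    nonCrossing_oneBlock_union_oneBlock hnc
  refine ⟨isPartitionOf_oneBlock hA hA₀, hunion.mono Finset.subset_union_left,
    isPartitionOf_oneBlock hB hB₀, hunion.mono Finset.subset_union_right, hunion, ?_⟩
  have hodd := card_oneBlock_add_card hA
  have heven := card_oneBlock_add_card hB
  rw [card_oddSet] at hodd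
  rw [card_evenSet] at heven
  omega

lemma forall_mem_oneBlock_card_sdiff_eq_one_iff (hA : A ⊆ G) :
    (∀ C ∈ oneBlock G A, (C \ I).card = 1) ↔ ∃ a ∈ A, I ∩ G = A.erase a := by
  have hsingleton (x : ℕ) : (({x} : Finset ℕ) \ I).card = 1 ↔ x ∉ I := by
    rw [Finset.card_eq_one]
    simp only [Finset.ext_iff, Finset.mem_sdiff, Finset.mem_singleton]
    exact ⟨fun ⟨y, hy⟩ => by have := hy y; have := hy x; tauto, fun hx => ⟨x, by grind⟩⟩
  have hblock : (A \ I).card = 1 ↔ ∃ a ∈ A, I ∩ A = A.erase a := by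
    rw [Finset.card_eq_one]
    simp only [Finset.ext_iff, Finset.mem_sdiff, Finset.mem_singleton, Finset.mem_inter,
      Finset.mem_erase]
    exact exists_congr fun a => ⟨fun h => by grind, fun h => by grind⟩
  have hoff : (∀ x ∈ G \ A, x ∉ I) ↔ I ∩ G = I ∩ A := by
    simp only [Finset.ext_iff, Finset.mem_sdiff, Finset.mem_inter]
    exact forall_congr' fun x => ⟨fun h => by grind, fun h => by grind⟩
  have hforall : (∀ C ∈ oneBlock G A, (C \ I).card = 1) ↔
      (A \ I).card = 1 ∧ ∀ x ∈ G \ A, x ∉ I := by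
    simp only [mem_oneBlock, or_imp, forall_and, forall_eq, forall_exists_index, and_imp,
      forall_comm (α := Finset ℕ), hsingleton]
  rw [hforall, hblock, hoff]
  constructor
  · rintro ⟨⟨a, ha, hIA⟩, hIG⟩
    exact ⟨a, ha, hIG.trans hIA⟩
  · rintro ⟨a, ha, hIG⟩
    have hIA : I ∩ A = A.erase a := by
      rw [← Finset.inter_eq_right.mpr hA, ← Finset.inter_assoc, hIG]
      grind
    exact ⟨⟨a, ha, hIA⟩, hIG.trans hIA.symm⟩

lemma concordantWith_oneBlock_iff (hGH : Disjoint G H) (hA : A ⊆ G) (hB : B ⊆ H)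
    (hI : I ⊆ G ∪ H) :
    ConcordantWith (oneBlock G A) (oneBlock H B) I ↔
      ∃ a ∈ A, ∃ b ∈ B, A.erase a ∪ B.erase b = I := by
  simp only [ConcordantWith, Finset.mem_union, or_imp, forall_and,
    forall_mem_oneBlock_card_sdiff_eq_one_iff hA, forall_mem_oneBlock_card_sdiff_eq_one_iff hB]
  have hdisj := Finset.disjoint_left.mp hGH
  constructor
  · rintro ⟨⟨a, ha, hIG⟩, b, hb, hIH⟩
    exact ⟨a, ha, b, hb, by grind⟩
  · rintro ⟨a, ha, b, hb, rfl⟩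
    exact ⟨⟨a, ha, by grind⟩, b, hb, by grind⟩

lemma erase_union_erase_mem_powersetCard (hGH : Disjoint G H) (hA : A ⊆ G) (hB : B ⊆ H) {a b : ℕ}
    (ha : a ∈ A) (hb : b ∈ B) :
    A.erase a ∪ B.erase b ∈ (G ∪ H).powersetCard (A.card + B.card - 2) := by
  have hdisj : Disjoint (A.erase a) (B.erase b) :=
    hGH.mono ((A.erase_subset a).trans hA) ((B.erase_subset b).trans hB)
  rw [Finset.mem_powersetCard, Finset.card_union_of_disjoint hdisj, Finset.card_erase_of_mem ha,
    Finset.card_erase_of_mem hb]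
  have := Finset.card_pos.mpr ⟨a, ha⟩
  have := Finset.card_pos.mpr ⟨b, hb⟩
  exact ⟨Finset.union_subset_union ((A.erase_subset a).trans hA) ((B.erase_subset b).trans hB),
    by omega⟩

lemma concVec_oneBlock (hGH : Disjoint G H) (hunion : G ∪ H = Finset.Icc 1 (2 * n)) (hA : A ⊆ G)
    (hB : B ⊆ H) (hcard : A.card + B.card = n + 1) :
    concVec n (oneBlock G A) (oneBlock H B) =
      ∑ a ∈ A, ∑ b ∈ B, finsetWedge n (n - 1) (A.erase a ∪ B.erase b) := by
  have hfilter : ((Finset.Icc 1 (2 * n)).powersetCard (n - 1)).filter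
      (ConcordantWith (oneBlock G A) (oneBlock H B)) =
        (A ×ˢ B).image fun p => A.erase p.1 ∪ B.erase p.2 := by
    ext I
    have hmem {a b : ℕ} (ha : a ∈ A) (hb : b ∈ B) :=
      erase_union_erase_mem_powersetCard hGH hA hB ha hb
    have := concordantWith_oneBlock_iff hGH hA hB (I := I)
    simp only [hunion, hcard] at hmem this
    simp only [Finset.mem_filter, Finset.mem_image, Finset.mem_product, Prod.exists]
    grind
  have hdisj := Finset.disjoint_left.mp (hGH.mono hA hB)
  rw [concVec, hfilter, Finset.sum_image, Finset.sum_product]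
  rintro ⟨a, b⟩ hab ⟨a', b'⟩ hab' h
  simp only [Finset.coe_product, Set.mem_prod, Finset.mem_coe, Finset.ext_iff, Finset.mem_union,
    Finset.mem_erase] at hab hab' h
  have := h a
  have := h b
  grind

/-- `w` is a nonzero concordance vector `w_σ`. -/
def IsNonzeroConcVec (n : ℕ) (w : ExteriorAlgebra ℝ (Fin (2 * n) → ℝ)) : Prop :=
  w ≠ 0 ∧ ∃ σ σd, IsNCPair n σ σd ∧ concVec n σ σd = w

lemma isNonzeroConcVec_two_blocks
    (hparity : A ⊆ oddSet n ∧ B ⊆ evenSet n ∨ A ⊆ evenSet n ∧ B ⊆ oddSet n) (hA₀ : A.Nonempty)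
    (hB₀ : B.Nonempty) (hcard : A.card + B.card = n + 1) (hnc : NonCrossing {A, B}) :
    IsNonzeroConcVec n (∑ a ∈ A, ∑ b ∈ B, finsetWedge n (n - 1) (A.erase a ∪ B.erase b)) := by
  wlog hodd : A ⊆ oddSet n ∧ B ⊆ evenSet n generalizing A B
  · obtain ⟨hA, hB⟩ := hparity.resolve_left hodd
    have := this (.inl ⟨hB, hA⟩) hB₀ hA₀ (by omega) (by rwa [Finset.pair_comm]) ⟨hB, hA⟩
    rw [Finset.sum_comm]
    simpa only [Finset.union_comm] using this
  obtain ⟨hA, hB⟩ := hodd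
  obtain ⟨a, ha⟩ := hA₀
  obtain ⟨b, hb⟩ := hB₀
  have hmem := erase_union_erase_mem_powersetCard disjoint_oddSet_evenSet hA hB ha hb
  have hconc : ConcordantWith (oneBlock (oddSet n) A) (oneBlock (evenSet n) B)
      (A.erase a ∪ B.erase b) :=
    (concordantWith_oneBlock_iff disjoint_oddSet_evenSet hA hB
      (Finset.mem_powersetCard.mp hmem).1).mpr ⟨a, ha, b, hb, rfl⟩
  rw [oddSet_union_evenSet, hcard] at hmem
  rw [← concVec_oneBlock disjoint_oddSet_evenSet oddSet_union_evenSet hA hB hcard]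
  exact ⟨concVec_ne_zero hmem hconc, _, _,
    isNCPair_oneBlock hA hB ⟨a, ha⟩ ⟨b, hb⟩ hcard hnc, rfl⟩

end TwoBlocks

section TwoBlockWedges

variable {n k : ℕ} {X Y Z : List ℕ}

lemma finsetWedge_toFinset {l : List ℕ} (hl : l.Pairwise (· < ·)) (hk : l.length = k) :
    finsetWedge n k l.toFinset = listWedge ℝ (l.map (stdE n)) := by
  have hsort : l.toFinset.sort (· ≤ ·) = l :=
    (List.toFinset_sort _ (hl.imp ne_of_lt)).mpr (hl.imp le_of_lt)
  have hmap : (fun p : Fin k => stdE n (l.getD p.val 0)) =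
      fun p : Fin k => (l.map (stdE n)).getD p.val (stdE n 0) := by
    funext p
    rw [List.getD_map]
  rw [finsetWedge, hsort, hmap, ← listWedge_ofFn, ofFn_getD (by simpa using hk)]

lemma sum_finsetWedge_erase_left (hlt : (X ++ Y ++ Z).Pairwise (· < ·))
    (hlen : X.length + Y.length + Z.length = k + 2) :
    ∑ a ∈ X.toFinset, ∑ b ∈ Y.toFinset,
        finsetWedge n k ((X ++ Z).toFinset.erase a ∪ Y.toFinset.erase b) =
      pathWedge ℝ (X.map (stdE n)) * pathWedge ℝ (Y.map (stdE n)) *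
        listWedge ℝ (Z.map (stdE n)) := by
  have hnodup : (X ++ Y ++ Z).Nodup := hlt.imp ne_of_lt
  have hterm (a : ℕ) (ha : a ∈ X) (b : ℕ) (hb : b ∈ Y) :
      finsetWedge n k ((X ++ Z).toFinset.erase a ∪ Y.toFinset.erase b) =
        listWedge ℝ ((X.erase a).map (stdE n)) * listWedge ℝ ((Y.erase b).map (stdE n)) *
          listWedge ℝ (Z.map (stdE n)) := by
    have hset : (X ++ Z).toFinset.erase a ∪ Y.toFinset.erase b =
        (X.erase a ++ Y.erase b ++ Z).toFinset := by
      ext x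
      simp only [Finset.mem_union, Finset.mem_erase, List.mem_toFinset, List.mem_append]
      grind [List.Nodup.mem_erase_iff]
    have hsub : (X.erase a ++ Y.erase b ++ Z).Sublist (X ++ Y ++ Z) :=
      ((List.erase_sublist).append (List.erase_sublist)).append (List.Sublist.refl Z)
    rw [hset, finsetWedge_toFinset (hlt.sublist hsub) (by grind)]
    simp only [List.map_append, listWedge_append]
  rw [Finset.sum_congr rfl fun a ha => Finset.sum_congr rfl fun b hb =>
      hterm a (List.mem_toFinset.mp ha) b (List.mem_toFinset.mp hb),
    ← sum_listWedge_erase ℝ (stdE n) (l := X) (by grind),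
    ← sum_listWedge_erase ℝ (stdE n) (l := Y) (by grind), Finset.sum_mul_sum]
  simp only [Finset.sum_mul]

lemma sum_finsetWedge_erase_right (hlt : (X ++ Y ++ Z).Pairwise (· < ·))
    (hlen : X.length + Y.length + Z.length = k + 2) :
    ∑ a ∈ Z.toFinset, ∑ b ∈ Y.toFinset,
        finsetWedge n k ((X ++ Z).toFinset.erase a ∪ Y.toFinset.erase b) =
      listWedge ℝ (X.map (stdE n)) * pathWedge ℝ (Y.map (stdE n)) *
        pathWedge ℝ (Z.map (stdE n)) := by
  have hnodup : (X ++ Y ++ Z).Nodup := hlt.imp ne_of_lt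
  have hterm (a : ℕ) (ha : a ∈ Z) (b : ℕ) (hb : b ∈ Y) :
      finsetWedge n k ((X ++ Z).toFinset.erase a ∪ Y.toFinset.erase b) =
        listWedge ℝ (X.map (stdE n)) * (listWedge ℝ ((Y.erase b).map (stdE n)) *
          listWedge ℝ ((Z.erase a).map (stdE n))) := by
    have hset : (X ++ Z).toFinset.erase a ∪ Y.toFinset.erase b =
        (X ++ Y.erase b ++ Z.erase a).toFinset := by
      ext x
      simp only [Finset.mem_union, Finset.mem_erase, List.mem_toFinset, List.mem_append]
      grind [List.Nodup.mem_erase_iff]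
    have hsub : (X ++ Y.erase b ++ Z.erase a).Sublist (X ++ Y ++ Z) :=
      ((List.Sublist.refl X).append (List.erase_sublist)).append (List.erase_sublist)
    rw [hset, finsetWedge_toFinset (hlt.sublist hsub) (by grind)]
    simp only [List.map_append, listWedge_append, mul_assoc]
  rw [Finset.sum_congr rfl fun a ha => Finset.sum_congr rfl fun b hb =>
      hterm a (List.mem_toFinset.mp ha) b (List.mem_toFinset.mp hb),
    Finset.sum_comm, ← sum_listWedge_erase ℝ (stdE n) (l := Y) (by grind),
    ← sum_listWedge_erase ℝ (stdE n) (l := Z) (by grind), mul_assoc, Finset.sum_mul_sum]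
  simp only [Finset.mul_sum]

lemma nonCrossing_pair_of_pairwise_lt (hlt : (X ++ Y ++ Z).Pairwise (· < ·)) :
    NonCrossing {(X ++ Z).toFinset, Y.toFinset} := by
  obtain ⟨hXY, _, hZ⟩ := List.pairwise_append.mp hlt
  obtain ⟨_, _, hXY⟩ := List.pairwise_append.mp hXY
  have hYZ (y : ℕ) (hy : y ∈ Y) (z : ℕ) (hz : z ∈ Z) : y < z := hZ y (by simp [hy]) z hz
  intro a b c d hab hbc hcd B₁ hB₁ B₂ hB₂ ha hc hb hd
  simp only [Finset.mem_insert, Finset.mem_singleton] at hB₁ hB₂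
  rcases hB₁ with rfl | rfl <;> rcases hB₂ with rfl | rfl <;>
    simp only [List.mem_toFinset, List.mem_append] at ha hb hc hd
  · rfl
  · rcases hc with hc | hc
    · exact absurd (hXY c hc b hb) hbc.not_gt
    · exact absurd (hYZ d hd c hc) hcd.not_gt
  · rcases hb with hb | hb
    · exact absurd (hXY b hb a ha) hab.not_gt
    · exact absurd (hYZ c hc b hb) hbc.not_gt
  · rfl

lemma isNonzeroConcVec_of_pairwise_lt (hlt : (X ++ Y ++ Z).Pairwise (· < ·)) (hX : X ≠ [])
    (hY : Y ≠ []) (hlen : X.length + Y.length + Z.length = n + 1)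
    (hparity : (X ++ Z).toFinset ⊆ oddSet n ∧ Y.toFinset ⊆ evenSet n ∨
      (X ++ Z).toFinset ⊆ evenSet n ∧ Y.toFinset ⊆ oddSet n) :
    IsNonzeroConcVec n
      (pathWedge ℝ (X.map (stdE n)) * pathWedge ℝ (Y.map (stdE n)) * listWedge ℝ (Z.map (stdE n)) +
        listWedge ℝ (X.map (stdE n)) * pathWedge ℝ (Y.map (stdE n)) *
          pathWedge ℝ (Z.map (stdE n))) := by
  have hnodup : (X ++ Y ++ Z).Nodup := hlt.imp ne_of_lt
  have hXlen := List.length_pos_iff.mpr hX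
  have hYlen := List.length_pos_iff.mpr hY
  have hcard : (X ++ Z).toFinset.card + Y.toFinset.card = n + 1 := by
    rw [List.toFinset_card_of_nodup (by grind), List.toFinset_card_of_nodup (by grind)]
    grind
  have hdisj : Disjoint X.toFinset Z.toFinset := by
    rw [List.disjoint_toFinset_iff_disjoint]
    grind [List.Disjoint]
  have := isNonzeroConcVec_two_blocks hparity (by simp [hX]) (by simpa using hY) hcard
    (nonCrossing_pair_of_pairwise_lt hlt)
  rwa [← sum_finsetWedge_erase_left hlt (k := n - 1) (by omega),
    ← sum_finsetWedge_erase_right hlt (k := n - 1) (by omega), ← Finset.sum_union hdisj,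
    ← List.toFinset_append]

end TwoBlockWedges

section BasisVectors

variable {n : ℕ}

lemma sum_neg_one_pow_mul_ite_eq_add_two {c k : ℕ} (hc : 1 ≤ c) (hc₂ : c ≤ 2) (hk : 1 ≤ k)
    (hkn : k + 2 ≤ 2 * n) :
    ∑ j : Fin n, (-1 : ℝ) ^ (j.val + 1) * (if 2 * j.val + c = k + 2 then 1 else 0) =
      -∑ j : Fin n, (-1 : ℝ) ^ (j.val + 1) * (if 2 * j.val + c = k then 1 else 0) := by
  obtain ⟨m, rfl⟩ : ∃ m, n = m + 1 := ⟨n - 1, by omega⟩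
  rw [Fin.sum_univ_succ, Fin.sum_univ_castSucc]
  have hfirst : ¬2 * (0 : Fin (m + 1)).val + c = k + 2 := by rw [Fin.val_zero]; omega
  have hlast : ¬2 * (Fin.last m).val + c = k := by rw [Fin.val_last]; omega
  have hshift (j : ℕ) : 2 * (j + 1) + c = k + 2 ↔ 2 * j + c = k := by omega
  simp only [hfirst, hlast, if_false, mul_zero, zero_add, add_zero, Fin.val_succ, Fin.val_castSucc,
    hshift, ← Finset.sum_neg_distrib]
  exact Finset.sum_congr rfl fun j _ => by ring

lemma vVec_mem_Vsub {k : ℕ} (hk : 1 ≤ k) (hkn : k + 2 ≤ 2 * n) : vVec n k ∈ Vsub n := by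
  have hsum {c : ℕ} (hc : 1 ≤ c) (hc₂ : c ≤ 2) :=
    sum_neg_one_pow_mul_ite_eq_add_two hc hc₂ hk hkn
  simp only [Vsub, Submodule.mem_inf, LinearMap.mem_ker, LinearMap.sum_apply, LinearMap.smul_apply,
    LinearMap.proj_apply, vVec, stdE, Pi.add_apply, smul_eq_mul, mul_add, Finset.sum_add_distrib,
    add_assoc, Nat.reduceAdd]
  exact ⟨by rw [hsum one_le_two le_rfl, add_neg_cancel],
    by rw [hsum le_rfl one_le_two, add_neg_cancel]⟩

/-- The basis vector `v_k` as an element of `V`, with the junk value `0` unless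
`1 ≤ k ≤ 2n - 2`. -/
noncomputable def vE (n k : ℕ) : Vsub n :=
  if h : 1 ≤ k ∧ k + 2 ≤ 2 * n then ⟨vVec n k, vVec_mem_Vsub h.1 h.2⟩ else 0

lemma coe_vE {k : ℕ} (hk : 1 ≤ k) (hkn : k + 2 ≤ 2 * n) :
    (vE n k : Fin (2 * n) → ℝ) = vVec n k := by
  rw [vE, dif_pos ⟨hk, hkn⟩]

lemma listWedge_map_vE_range' {a k : ℕ} (ha : 1 ≤ a) (hak : a + 2 * k ≤ 2 * n) :
    listWedge ℝ (((List.range' a k 2).map (vE n)).map (Vsub n).subtype) =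
      pathWedge ℝ ((List.range' a (k + 1) 2).map (stdE n)) := by
  induction k generalizing a with
  | zero => simp [pathWedge]
  | succ k ih =>
    simp only [List.range'_succ, List.map_cons, listWedge_cons, pathWedge] at ih ⊢
    rw [ih (by omega) (by omega), Submodule.subtype_apply, coe_vE ha (by omega), vVec]

end BasisVectors

section ConcordantFrames

open ExteriorAlgebra (ι)

variable {n : ℕ}

/-- A list of `n - 1` vectors of `V` whose wedge is a nonzero concordance vector; it exhibits
this concordance vector as decomposable. -/
def IsConcordantFrame (n : ℕ) (l : List (Vsub n)) : Prop :=
  l.length = n - 1 ∧ IsNonzeroConcVec n (ExteriorAlgebra.map (Vsub n).subtype (listWedge ℝ l))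

lemma IsConcordantFrame.form_eq_zero {j : ℕ} (hj : n - 1 = j + 2) {l : List (Vsub n)}
    (hl : IsConcordantFrame n l) {ω : Vsub n →ₗ[ℝ] Vsub n →ₗ[ℝ] ℝ} (hω : ω.IsAlt)
    {Q : ⋀[ℝ]^(n - 1) (Vsub n) →ₗ[ℝ] ⋀[ℝ]^j (Vsub n)} (hQ : IsConvolutionOperator ω Q)
    (hker : HV n ≤ LinearMap.ker Q) {x y : Vsub n} (hx : x ∈ l) (hy : y ∈ l) : ω x y = 0 := by
  obtain ⟨hlen, hne, σ, σd, hpair, hconc⟩ := hl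
  refine hQ.form_eq_zero hj hω hlen (fun h => hne (by rw [h, map_zero]))
    (hker (Submodule.subset_span ⟨σ, σd, hpair, ?_⟩)) hx hy
  rw [coe_wedgeIn_getD hlen, hconc]

lemma toFinset_range'_two_subset_oddSet {a k : ℕ} (ha : a % 2 = 1) (hak : a + 2 * k ≤ 2 * n + 1) :
    (List.range' a k 2).toFinset ⊆ oddSet n := by
  intro x hx
  obtain ⟨i, hi, rfl⟩ := List.mem_range'.mp (List.mem_toFinset.mp hx)
  rw [mem_oddSet, Finset.mem_Icc]
  omega

lemma toFinset_range'_two_subset_evenSet {a k : ℕ} (ha : a % 2 = 0) (ha₀ : a ≠ 0)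
    (hak : a + 2 * k ≤ 2 * n + 2) : (List.range' a k 2).toFinset ⊆ evenSet n := by
  intro x hx
  obtain ⟨i, hi, rfl⟩ := List.mem_range'.mp (List.mem_toFinset.mp hx)
  rw [mem_evenSet, Finset.mem_Icc]
  omega

lemma pairwise_lt_append_range' {l : List ℕ} {a k : ℕ} (hl : l.Pairwise (· < ·))
    (hla : ∀ x ∈ l, x < a) : (l ++ List.range' a k 2).Pairwise (· < ·) := by
  refine List.pairwise_append.mpr ⟨hl, List.pairwise_lt_range' _ two_pos, fun x hx y hy => ?_⟩
  obtain ⟨i, _, rfl⟩ := List.mem_range'.mp hy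
  have := hla x hx
  omega

/-- The frame coming from the blocks `{1, 3, …, 2k-1}` and `{2k, 2k+2, …, 2n}`. -/
lemma isConcordantFrame_odd_even {k : ℕ} (hk : 1 ≤ k) (hkn : k ≤ n) :
    IsConcordantFrame n
      ((List.range' 1 (k - 1) 2 ++ List.range' (2 * k) (n - k) 2).map (vE n)) := by
  refine ⟨by simp only [List.length_map, List.length_append, List.length_range']; omega, ?_⟩
  have hlt : (List.range' 1 (k - 1 + 1) 2 ++ List.range' (2 * k) (n - k + 1) 2 ++ []).Pairwise
      (· < ·) := by
    rw [List.append_nil]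
    refine pairwise_lt_append_range' (List.pairwise_lt_range' _ two_pos) fun x hx => ?_
    obtain ⟨i, hi, rfl⟩ := List.mem_range'.mp hx
    omega
  have hconc := isNonzeroConcVec_of_pairwise_lt (n := n) hlt (by simp) (by simp)
    (by simp only [List.length_range', List.length_nil]; omega)
    (.inl ⟨by simpa using toFinset_range'_two_subset_oddSet (n := n) rfl (by omega),
      toFinset_range'_two_subset_evenSet (by omega) (by omega) (by omega)⟩)
  simp only [List.map_nil, listWedge_nil, pathWedge, mul_one, mul_zero, add_zero] at hconc
  rwa [map_listWedge, List.map_append, List.map_append, listWedge_append,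
    listWedge_map_vE_range' le_rfl (by omega), listWedge_map_vE_range' (by omega) (by omega)]

lemma coe_vE_succ_sub_vE_pred {p : ℕ} (hp : 2 ≤ p) (hpn : p + 3 ≤ 2 * n) :
    ((vE n (p + 1) - vE n (p - 1) : Vsub n) : Fin (2 * n) → ℝ) =
      stdE n (p + 3) - stdE n (p - 1) := by
  rw [Submodule.coe_sub, coe_vE (by omega) (by omega), coe_vE (by omega) (by omega), vVec, vVec,
    show p - 1 + 2 = p + 1 by omega]
  abel

lemma map_subtype_listWedge_nested {s j r p : ℕ} (hs : 1 ≤ s) (hp : p = s + 2 * j + 1)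
    (hpn : p + 3 + 2 * r ≤ 2 * n) :
    ExteriorAlgebra.map (Vsub n).subtype (listWedge ℝ ((List.range' s j 2).map (vE n) ++
        vE n p :: (vE n (p + 1) - vE n (p - 1)) :: (List.range' (p + 3) r 2).map (vE n))) =
      pathWedge ℝ ((List.range' s (j + 1) 2).map (stdE n)) *
          pathWedge ℝ ((List.range' p 2 2).map (stdE n)) *
          listWedge ℝ ((List.range' (p + 3) (r + 1) 2).map (stdE n)) +
        listWedge ℝ ((List.range' s (j + 1) 2).map (stdE n)) *
          pathWedge ℝ ((List.range' p 2 2).map (stdE n)) *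
          pathWedge ℝ ((List.range' (p + 3) (r + 1) 2).map (stdE n)) := by
  have hleft : listWedge ℝ ((List.range' s (j + 1) 2).map (stdE n)) =
      pathWedge ℝ ((List.range' s (j + 1) 2).map (stdE n)) * ι ℝ (stdE n (p - 1)) := by
    rw [List.range'_concat, List.map_append, List.map_singleton,
      listWedge_concat_eq_pathWedge_mul_ι, show p - 1 = s + 2 * j by omega]
  have hright : listWedge ℝ ((List.range' (p + 3) (r + 1) 2).map (stdE n)) =
      ι ℝ (stdE n (p + 3)) * pathWedge ℝ ((List.range' (p + 3) (r + 1) 2).map (stdE n)) := by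
    rw [List.range'_succ, List.map_cons, listWedge_cons_eq_ι_mul_pathWedge]
  have hmiddle : pathWedge ℝ ((List.range' p 2 2).map (stdE n)) = ι ℝ (vVec n p) := by
    simp [List.range'_succ, pathWedge, vVec]
  rw [map_listWedge, List.map_append, List.map_cons, List.map_cons, listWedge_append,
    listWedge_cons, listWedge_cons, listWedge_map_vE_range' (by omega) (by omega),
    listWedge_map_vE_range' (by omega) (by omega), Submodule.subtype_apply,
    Submodule.subtype_apply, coe_vE_succ_sub_vE_pred (by omega) (by omega),
    coe_vE (by omega) (by omega), hleft, hright, hmiddle, map_sub,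
    mul_assoc (pathWedge ℝ _) (ι ℝ (stdE n (p - 1))), ι_mul_ι_swap ℝ (stdE n (p - 1))]
  noncomm_ring

/-- The frame coming from the blocks `{p, p+2}` and `{s, s+2, …, p-1} ∪ {p+3, p+5, …}`. -/
lemma isConcordantFrame_nested {s j r p : ℕ} (hs : s = 1 ∨ s = 2) (hp : p = s + 2 * j + 1)
    (hn : j + r + 3 = n) :
    IsConcordantFrame n ((List.range' s j 2).map (vE n) ++
      vE n p :: (vE n (p + 1) - vE n (p - 1)) :: (List.range' (p + 3) r 2).map (vE n)) := by
  refine ⟨?_, ?_⟩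
  · simp only [List.length_append, List.length_cons, List.length_map, List.length_range']
    omega
  have hlt : (List.range' s (j + 1) 2 ++ List.range' p 2 2 ++
      List.range' (p + 3) (r + 1) 2).Pairwise (· < ·) := by
    refine pairwise_lt_append_range' (pairwise_lt_append_range'
      (List.pairwise_lt_range' _ two_pos) fun x hx => ?_) fun x hx => ?_
    all_goals simp only [List.mem_append, List.mem_range'] at hx; omega
  have hparity : (List.range' s (j + 1) 2 ++ List.range' (p + 3) (r + 1) 2).toFinset ⊆ oddSet n ∧
      (List.range' p 2 2).toFinset ⊆ evenSet n ∨
      (List.range' s (j + 1) 2 ++ List.range' (p + 3) (r + 1) 2).toFinset ⊆ evenSet n ∧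
        (List.range' p 2 2).toFinset ⊆ oddSet n := by
    rw [List.toFinset_append]
    rcases hs with rfl | rfl
    · exact .inl ⟨Finset.union_subset
        (toFinset_range'_two_subset_oddSet (by omega) (by omega))
        (toFinset_range'_two_subset_oddSet (by omega) (by omega)),
        toFinset_range'_two_subset_evenSet (by omega) (by omega) (by omega)⟩
    · exact .inr ⟨Finset.union_subset
        (toFinset_range'_two_subset_evenSet (by omega) (by omega) (by omega))
        (toFinset_range'_two_subset_evenSet (by omega) (by omega) (by omega)),
        toFinset_range'_two_subset_oddSet (by omega) (by omega)⟩
  have hconc := isNonzeroConcVec_of_pairwise_lt hlt (by simp) (by simp)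
    (by simp only [List.length_range']; omega) hparity
  rwa [map_subtype_listWedge_nested (by omega) hp (by omega)]

end ConcordantFrames

section FrameIsotropic

variable {n : ℕ} {ω : Vsub n →ₗ[ℝ] Vsub n →ₗ[ℝ] ℝ}

/-- `ω` vanishes on the span of every frame of a decomposable concordance vector. -/
def IsFrameIsotropic (ω : Vsub n →ₗ[ℝ] Vsub n →ₗ[ℝ] ℝ) : Prop :=
  ∀ l, IsConcordantFrame n l → ∀ x ∈ l, ∀ y ∈ l, ω x y = 0

lemma vE_mem_map_range' {a k i : ℕ} (hai : a ≤ i) (hik : i < a + 2 * k) (hpar : i % 2 = a % 2) :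
    vE n i ∈ (List.range' a k 2).map (vE n) :=
  List.mem_map_of_mem (List.mem_range'.mpr ⟨(i - a) / 2, by omega, by omega⟩)

namespace IsFrameIsotropic

lemma form_vE_eq_zero (hiso : IsFrameIsotropic ω) {i j : ℕ} (hi : 1 ≤ i) (hij : i + 2 ≤ j)
    (hj : j + 2 ≤ 2 * n) : ω (vE n i) (vE n j) = 0 := by
  have odd_even (k : ℕ) (hk : 1 ≤ k) (hkn : k ≤ n) :=
    hiso _ (isConcordantFrame_odd_even hk hkn)
  simp only [List.map_append, List.mem_append] at odd_even
  rcases Nat.mod_two_eq_zero_or_one i with hi₂ | hi₂ <;>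
    rcases Nat.mod_two_eq_zero_or_one j with hj₂ | hj₂
  · exact odd_even 1 le_rfl (by omega)
      _ (.inr (vE_mem_map_range' (by omega) (by omega) (by omega)))
      _ (.inr (vE_mem_map_range' (by omega) (by omega) (by omega)))
  · refine hiso _ (isConcordantFrame_nested (s := 1) (j := i / 2 - 1) (r := n - i / 2 - 2) (p := i)
      (by omega) (by omega) (by omega)) _ (by simp) _ ?_
    have := vE_mem_map_range' (n := n) (a := i + 3) (k := n - i / 2 - 2) (i := j)
      (by omega) (by omega) (by omega)
    simp [this]
  · exact odd_even (j / 2) (by omega) (by omega)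
      _ (.inl (vE_mem_map_range' (by omega) (by omega) (by omega)))
      _ (.inr (vE_mem_map_range' (by omega) (by omega) (by omega)))
  · exact odd_even n (by omega) le_rfl
      _ (.inl (vE_mem_map_range' (by omega) (by omega) (by omega)))
      _ (.inl (vE_mem_map_range' (by omega) (by omega) (by omega)))

lemma form_vE_succ_eq_form_vE_pred (hiso : IsFrameIsotropic ω) {p : ℕ} (hp : 2 ≤ p)
    (hpn : p + 3 ≤ 2 * n) : ω (vE n p) (vE n (p + 1)) = ω (vE n p) (vE n (p - 1)) := by
  obtain ⟨s, j, hs, hpj⟩ : ∃ s j, (s = 1 ∨ s = 2) ∧ p = s + 2 * j + 1 :=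
    ⟨2 - (p + 1) % 2, (p - 2) / 2, by omega, by omega⟩
  have hdiff : ω (vE n p) (vE n (p + 1) - vE n (p - 1)) = 0 :=
    hiso _ (isConcordantFrame_nested (r := n - 3 - j) hs hpj (by omega)) _ (by simp) _ (by simp)
  rwa [map_sub, sub_eq_zero] at hdiff

lemma form_vE_vE_succ (hiso : IsFrameIsotropic ω) (hω : ω.IsAlt) {i : ℕ} (hi : 1 ≤ i)
    (hin : i + 3 ≤ 2 * n) :
    ω (vE n i) (vE n (i + 1)) = ω (vE n 1) (vE n 2) * (-1) ^ (i + 1) := by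
  induction i, hi using Nat.le_induction with
  | base => simp
  | succ i hi ih =>
    rw [hiso.form_vE_succ_eq_form_vE_pred (by omega) hin, Nat.add_sub_cancel, ← hω.neg,
      ih (by omega)]
    ring

lemma form_vE_eq_zero_of_not_adjacent (hiso : IsFrameIsotropic ω) (hω : ω.IsAlt) {i j : ℕ}
    (hi : 1 ≤ i) (hin : i + 2 ≤ 2 * n) (hj : 1 ≤ j) (hjn : j + 2 ≤ 2 * n)
    (hij : ¬(j = i + 1 ∨ i = j + 1)) : ω (vE n i) (vE n j) = 0 := by
  rcases lt_trichotomy i j with h | rfl | h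
  · exact hiso.form_vE_eq_zero hi (by omega) hjn
  · exact hω _
  · rw [← hω.neg, hiso.form_vE_eq_zero hj (by omega) hin, neg_zero]

lemma form_vE_eq_zero_of_form_vE_one_two (hiso : IsFrameIsotropic ω) (hω : ω.IsAlt)
    (h₁₂ : ω (vE n 1) (vE n 2) = 0) {i j : ℕ} (hi : 1 ≤ i) (hin : i + 2 ≤ 2 * n) (hj : 1 ≤ j)
    (hjn : j + 2 ≤ 2 * n) : ω (vE n i) (vE n j) = 0 := by
  by_cases hij : j = i + 1 ∨ i = j + 1
  · rcases hij with rfl | rfl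
    · rw [hiso.form_vE_vE_succ hω hi hjn, h₁₂, zero_mul]
    · rw [← hω.neg, hiso.form_vE_vE_succ hω hj hin, h₁₂, zero_mul, neg_zero]
  · exact hiso.form_vE_eq_zero_of_not_adjacent hω hi hin hj hjn hij

end IsFrameIsotropic

end FrameIsotropic

section Properness

variable {n : ℕ} {σ σd : Finset (Finset ℕ)} {I : Finset ℕ}

/-- The elements `x` and `y` lie in a common block of `P`. -/
def SameBlock (P : Finset (Finset ℕ)) (x y : ℕ) : Prop := ∃ B ∈ P, x ∈ B ∧ y ∈ B

namespace IsNCPair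

lemma isPartitionOf_union (h : IsNCPair n σ σd) :
    IsPartitionOf (Finset.Icc 1 (2 * n)) (σ ∪ σd) := by
  obtain ⟨⟨hσ₀, hσ, hσ!⟩, _, ⟨hσd₀, hσd, hσd!⟩, _⟩ := h
  have hdisj := Finset.disjoint_left.mp (disjoint_oddSet_evenSet (n := n))
  rw [← oddSet_union_evenSet]
  refine ⟨fun B hB => (Finset.mem_union.mp hB).elim (hσ₀ B) (hσd₀ B), fun B hB => ?_,
    fun x hx => ?_⟩
  · exact (Finset.mem_union.mp hB).elim (fun hB => (hσ B hB).trans Finset.subset_union_left)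
      fun hB => (hσd B hB).trans Finset.subset_union_right
  · rcases Finset.mem_union.mp hx with hx | hx
    · obtain ⟨B, ⟨hB, hxB⟩, huniq⟩ := hσ! x hx
      refine ⟨B, ⟨Finset.mem_union_left _ hB, hxB⟩, fun C ⟨hC, hxC⟩ => ?_⟩
      exact huniq C ⟨(Finset.mem_union.mp hC).resolve_right fun hC => hdisj hx (hσd C hC hxC), hxC⟩
    · obtain ⟨B, ⟨hB, hxB⟩, huniq⟩ := hσd! x hx
      refine ⟨B, ⟨Finset.mem_union_right _ hB, hxB⟩, fun C ⟨hC, hxC⟩ => ?_⟩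
      exact huniq C ⟨(Finset.mem_union.mp hC).resolve_left fun hC => hdisj (hσ C hC hxC) hx, hxC⟩

lemma mod_two_eq (h : IsNCPair n σ σd) {x y : ℕ} (hxy : SameBlock (σ ∪ σd) x y) :
    x % 2 = y % 2 := by
  obtain ⟨⟨_, hσ, _⟩, _, ⟨_, hσd, _⟩, _⟩ := h
  obtain ⟨B, hB, hx, hy⟩ := hxy
  rcases Finset.mem_union.mp hB with hB | hB
  · rw [(mem_oddSet.mp (hσ B hB hx)).1, (mem_oddSet.mp (hσ B hB hy)).1]
  · rw [(mem_evenSet.mp (hσd B hB hx)).1, (mem_evenSet.mp (hσd B hB hy)).1]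

lemma mod_two_eq_of_crossing (h : IsNCPair n σ σd) {a b c d : ℕ} (hac : SameBlock (σ ∪ σd) a c)
    (hbd : SameBlock (σ ∪ σd) b d) (hab : a < b) (hbc : b < c) (hcd : c < d) : a % 2 = b % 2 := by
  obtain ⟨B, hB, ha, hc⟩ := hac
  obtain ⟨C, hC, hb, hd⟩ := hbd
  obtain ⟨_, _, _, _, hnc, _⟩ := id h
  obtain rfl : B = C := hnc a b c d hab hbc hcd B hB C hC ha hc hb hd
  exact h.mod_two_eq ⟨B, hB, ha, hb⟩

lemma exists_sameBlock_notMem (h : IsNCPair n σ σd) (hI : ConcordantWith σ σd I) {x : ℕ}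
    (hx : x ∈ Finset.Icc 1 (2 * n)) :
    ∃ y ∈ Finset.Icc 1 (2 * n), y ∉ I ∧ y % 2 = x % 2 ∧ SameBlock (σ ∪ σd) x y := by
  obtain ⟨_, hsub, hcover⟩ := h.isPartitionOf_union
  obtain ⟨B, ⟨hB, hxB⟩, _⟩ := hcover x hx
  obtain ⟨y, hy⟩ := Finset.card_pos.mp ((hI B hB).symm ▸ one_pos)
  obtain ⟨hyB, hyI⟩ := Finset.mem_sdiff.mp hy
  exact ⟨y, hsub B hB hyB, hyI, h.mod_two_eq ⟨B, hB, hyB, hxB⟩, B, hB, hxB, hyB⟩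

lemma mem_iff_mem_of_sameBlock (h : IsNCPair n σ σd) {x y : ℕ} (hxy : SameBlock (σ ∪ σd) x y)
    {B : Finset ℕ} (hB : B ∈ σ ∪ σd) : x ∈ B ↔ y ∈ B := by
  obtain ⟨_, hsub, hcover⟩ := h.isPartitionOf_union
  obtain ⟨C, hC, hxC, hyC⟩ := hxy
  have heq {z : ℕ} (hzB : z ∈ B) (hzC : z ∈ C) : B = C :=
    (hcover z (hsub C hC hzC)).unique ⟨hB, hzB⟩ ⟨hC, hzC⟩
  exact ⟨fun hx => heq hx hxC ▸ hyC, fun hy => heq hy hyC ▸ hxC⟩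

lemma concordantWith_map_swap_iff (h : IsNCPair n σ σd) {x y : ℕ}
    (hxy : SameBlock (σ ∪ σd) x y) :
    ConcordantWith σ σd (I.map (Equiv.swap x y).toEmbedding) ↔ ConcordantWith σ σd I := by
  refine forall₂_congr fun B hB => ?_
  have hmap : B.map (Equiv.swap x y).toEmbedding = B := by
    have := h.mem_iff_mem_of_sameBlock hxy hB
    ext z
    rw [Finset.mem_map_equiv, Equiv.symm_swap, Equiv.swap_apply_def]
    split_ifs with hzx hzy
    · rw [hzx, this]
    · rw [hzy, this]
    · rfl
  rw [← Finset.card_map (Equiv.swap x y).toEmbedding (s := B \ I), Finset.map_sdiff, hmap]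

end IsNCPair

/-- The set `{4} ∪ {5, 7, 9, …, 2n-1}`. -/
def leftProbe (n : ℕ) : Finset ℕ := insert 4 (oddSet n \ {1, 3})

/-- The set `{2} ∪ {1, 7, 9, …, 2n-1}`, obtained from `leftProbe n` by exchanging `1` with `5`
and `2` with `4`. -/
def rightProbe (n : ℕ) : Finset ℕ := insert 2 (oddSet n \ {3, 5})

lemma mem_leftProbe {x : ℕ} :
    x ∈ leftProbe n ↔ x = 4 ∨ x % 2 = 1 ∧ x ∈ Finset.Icc 5 (2 * n) := by
  simp only [leftProbe, Finset.mem_insert, Finset.mem_sdiff, Finset.mem_singleton, mem_oddSet,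
    Finset.mem_Icc]
  omega

lemma mem_rightProbe {x : ℕ} :
    x ∈ rightProbe n ↔ x = 2 ∨ x % 2 = 1 ∧ x ∈ Finset.Icc 1 (2 * n) ∧ x ≠ 3 ∧ x ≠ 5 := by
  simp only [rightProbe, Finset.mem_insert, Finset.mem_sdiff, Finset.mem_singleton, mem_oddSet,
    Finset.mem_Icc]
  omega

lemma rightProbe_eq_map_map_leftProbe (hn : 3 ≤ n) :
    rightProbe n = ((leftProbe n).map (Equiv.swap 1 5).toEmbedding).map
      (Equiv.swap 2 4).toEmbedding := by
  ext x
  simp only [Finset.mem_map_equiv, Equiv.symm_swap, Equiv.swap_apply_def, mem_leftProbe,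
    mem_rightProbe, Finset.mem_Icc]
  split_ifs <;> omega

lemma sameBlock_of_concordantWith_leftProbe (hn : 3 ≤ n) (h : IsNCPair n σ σd)
    (hI : ConcordantWith σ σd (leftProbe n)) :
    SameBlock (σ ∪ σd) 1 5 ∧ SameBlock (σ ∪ σd) 2 4 := by
  obtain ⟨y, hy, hyI, hy₂, h4y⟩ :=
    h.exists_sameBlock_notMem hI (x := 4) (Finset.mem_Icc.mpr (by omega))
  obtain ⟨z, hz, hzI, hz₂, h5z⟩ :=
    h.exists_sameBlock_notMem hI (x := 5) (Finset.mem_Icc.mpr (by omega))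
  simp only [mem_leftProbe, Finset.mem_Icc] at hy hyI hz hzI
  have symm {x y : ℕ} : SameBlock (σ ∪ σd) x y → SameBlock (σ ∪ σd) y x :=
    fun ⟨B, hB, hx, hy⟩ => ⟨B, hB, hy, hx⟩
  obtain rfl : y = 2 := by
    by_contra
    have := h.mod_two_eq_of_crossing (symm h5z) h4y (by omega) (by omega) (by omega)
    omega
  obtain rfl : z = 1 := by
    by_contra
    have := h.mod_two_eq_of_crossing (symm h4y) (symm h5z) (by omega) (by omega) (by omega)
    omega
  exact ⟨symm h5z, symm h4y⟩

lemma sameBlock_of_concordantWith_rightProbe (hn : 3 ≤ n) (h : IsNCPair n σ σd)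
    (hI : ConcordantWith σ σd (rightProbe n)) :
    SameBlock (σ ∪ σd) 1 5 ∧ SameBlock (σ ∪ σd) 2 4 := by
  obtain ⟨y, hy, hyI, hy₂, h2y⟩ :=
    h.exists_sameBlock_notMem hI (x := 2) (Finset.mem_Icc.mpr (by omega))
  obtain ⟨z, hz, hzI, hz₂, h1z⟩ :=
    h.exists_sameBlock_notMem hI (x := 1) (Finset.mem_Icc.mpr (by omega))
  simp only [mem_rightProbe, Finset.mem_Icc] at hy hyI hz hzI
  obtain rfl : y = 4 := by
    by_contra
    have := h.mod_two_eq_of_crossing h1z h2y (by omega) (by omega) (by omega)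
    omega
  obtain rfl : z = 5 := by
    by_contra
    have := h.mod_two_eq_of_crossing h1z h2y (by omega) (by omega) (by omega)
    omega
  exact ⟨h1z, h2y⟩

lemma concordantWith_leftProbe_iff (hn : 3 ≤ n) (h : IsNCPair n σ σd) :
    ConcordantWith σ σd (leftProbe n) ↔ ConcordantWith σ σd (rightProbe n) := by
  have of_sameBlock (hsame : SameBlock (σ ∪ σd) 1 5 ∧ SameBlock (σ ∪ σd) 2 4) :
      ConcordantWith σ σd (rightProbe n) ↔ ConcordantWith σ σd (leftProbe n) := by
    rw [rightProbe_eq_map_map_leftProbe hn, h.concordantWith_map_swap_iff hsame.2,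
      h.concordantWith_map_swap_iff hsame.1]
  exact ⟨fun hI => (of_sameBlock (sameBlock_of_concordantWith_leftProbe hn h hI)).mpr hI,
    fun hI => (of_sameBlock (sameBlock_of_concordantWith_rightProbe hn h hI)).mp hI⟩

lemma sort_leftProbe (hn : 2 ≤ n) :
    (leftProbe n).sort (· ≤ ·) = 4 :: List.range' 5 (n - 2) 2 := by
  have hlt : (4 :: List.range' 5 (n - 2) 2).Pairwise (· < ·) := by
    refine List.pairwise_cons.mpr ⟨fun x hx => ?_, List.pairwise_lt_range' _ two_pos⟩
    obtain ⟨i, _, rfl⟩ := List.mem_range'.mp hx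
    omega
  have hset : leftProbe n = (4 :: List.range' 5 (n - 2) 2).toFinset := by
    ext x
    rw [mem_leftProbe, List.mem_toFinset, List.mem_cons, List.mem_range', Finset.mem_Icc]
    refine or_congr_right ⟨fun hx => ⟨(x - 5) / 2, by omega, by omega⟩, ?_⟩
    rintro ⟨i, hi, rfl⟩
    omega
  rw [hset, (List.toFinset_sort _ (hlt.imp ne_of_lt)).mpr (hlt.imp le_of_lt)]

lemma getD_sort_leftProbe (q : Fin (n - 1)) :
    ((leftProbe n).sort (· ≤ ·)).getD q.val 0 = if q.val = 0 then 4 else 2 * q.val + 3 := by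
  have hq := q.isLt
  rw [sort_leftProbe (by omega)]
  rcases q with ⟨_ | q, h⟩
  · rfl
  · rw [List.getD_cons_succ, List.getD_eq_getElem _ _ (by rw [List.length_range']; omega),
      List.getElem_range', if_neg (Nat.succ_ne_zero q)]
    ring

lemma leftProbe_mem_powersetCard (hn : 3 ≤ n) :
    leftProbe n ∈ (Finset.Icc 1 (2 * n)).powersetCard (n - 1) := by
  refine Finset.mem_powersetCard.mpr ⟨fun x hx => ?_, ?_⟩
  · rw [mem_leftProbe, Finset.mem_Icc] at hx
    rw [Finset.mem_Icc]
    omega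
  · rw [← Finset.length_sort (· ≤ ·), sort_leftProbe (by omega), List.length_cons,
      List.length_range']
    omega

lemma rightProbe_mem_powersetCard (hn : 3 ≤ n) :
    rightProbe n ∈ (Finset.Icc 1 (2 * n)).powersetCard (n - 1) := by
  refine Finset.mem_powersetCard.mpr ⟨fun x hx => ?_, ?_⟩
  · rw [mem_rightProbe, Finset.mem_Icc] at hx
    rw [Finset.mem_Icc]
    omega
  · rw [rightProbe_eq_map_map_leftProbe hn, Finset.card_map, Finset.card_map,
      (Finset.mem_powersetCard.mp (leftProbe_mem_powersetCard hn)).2]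

lemma wedgeCoord_leftProbe_map_eq_wedgeCoord_rightProbe_map (hn : 3 ≤ n)
    {y : ⋀[ℝ]^(n - 1) (Vsub n)} (hy : y ∈ HV n) :
    wedgeCoord n (n - 1) (leftProbe n) (ExteriorAlgebra.map (Vsub n).subtype y) =
      wedgeCoord n (n - 1) (rightProbe n) (ExteriorAlgebra.map (Vsub n).subtype y) := by
  induction hy using Submodule.span_induction with
  | mem y hy =>
    obtain ⟨σ, σd, hpair, hconc⟩ := hy
    rw [hconc, wedgeCoord_concVec σ σd (leftProbe_mem_powersetCard hn),
      wedgeCoord_concVec σ σd (rightProbe_mem_powersetCard hn)]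
    simp only [concordantWith_leftProbe_iff hn hpair]
  | zero => simp
  | add y z _ _ hy hz => simp only [Submodule.coe_add, map_add, hy, hz]
  | smul c y _ hy => simp only [Submodule.coe_smul, map_smul, hy]

/-- The indices of the basis vectors in `v₄ ∧ v₃ ∧ v₅ ∧ … ∧ v_{2n-3}`. -/
def witnessIndex (p : ℕ) : ℕ := if p = 0 then 4 else 2 * p + 1

lemma witnessIndex_add_two_le (hn : 3 ≤ n) (p : Fin (n - 1)) : witnessIndex p + 2 ≤ 2 * n := by
  have := p.isLt
  unfold witnessIndex
  split_ifs <;> omega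

lemma one_le_witnessIndex (p : ℕ) : 1 ≤ witnessIndex p := by
  unfold witnessIndex
  split_ifs <;> omega

lemma stdE_dotProduct_vVec {i : ℕ} (hi : i ∈ Finset.Icc 1 (2 * n)) (k : ℕ) :
    stdE n i ⬝ᵥ vVec n k = (if i = k then 1 else 0) + if i = k + 2 then 1 else 0 := by
  rw [vVec, dotProduct_add, stdE_dotProduct_stdE hi, stdE_dotProduct_stdE hi]

lemma map_subtype_wedgeIn_witness (hn : 3 ≤ n) :
    ExteriorAlgebra.map (Vsub n).subtype
        (wedgeIn (n - 1) fun p : Fin (n - 1) => vE n (witnessIndex p) :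
          ExteriorAlgebra ℝ (Vsub n)) =
      ExteriorAlgebra.ιMulti ℝ (n - 1) fun p => vVec n (witnessIndex p) := by
  rw [wedgeIn, ExteriorAlgebra.map_apply_ιMulti]
  congr 1
  funext p
  exact coe_vE (one_le_witnessIndex p) (witnessIndex_add_two_le hn p)

lemma wedgeCoord_leftProbe_witness (hn : 3 ≤ n) :
    wedgeCoord n (n - 1) (leftProbe n)
      (ExteriorAlgebra.ιMulti ℝ (n - 1) fun p => vVec n (witnessIndex p)) = 1 := by
  obtain ⟨hsub, hcard⟩ := Finset.mem_powersetCard.mp (leftProbe_mem_powersetCard hn)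
  have hentry (p q : Fin (n - 1)) :=
    stdE_dotProduct_vVec (hsub (getD_sort_mem hcard q)) (witnessIndex p)
  simp only [getD_sort_leftProbe, witnessIndex] at hentry
  rw [wedgeCoord_ιMulti, Matrix.det_of_isLowerTriangular]
  · refine Finset.prod_eq_one fun p _ => ?_
    simp only [Matrix.of_apply, getD_sort_leftProbe, witnessIndex, hentry]
    split_ifs <;> first | omega | simp
  · intro p q hpq
    replace hpq : p.val < q.val := hpq
    simp only [Matrix.of_apply, getD_sort_leftProbe, witnessIndex, hentry]
    split_ifs <;> first | omega | simp

lemma wedgeCoord_rightProbe_witness (hn : 3 ≤ n) :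
    wedgeCoord n (n - 1) (rightProbe n)
      (ExteriorAlgebra.ιMulti ℝ (n - 1) fun p => vVec n (witnessIndex p)) = 0 := by
  obtain ⟨hsub, hcard⟩ := Finset.mem_powersetCard.mp (rightProbe_mem_powersetCard hn)
  have htwo : 2 ∈ rightProbe n := mem_rightProbe.mpr (.inl rfl)
  obtain ⟨q, hq⟩ := exists_getD_sort_eq hcard htwo
  rw [wedgeCoord_ιMulti]
  refine Matrix.det_eq_zero_of_column_eq_zero q fun p => ?_
  rw [Matrix.of_apply, hq, stdE_dotProduct_vVec (hsub htwo), witnessIndex]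
  split_ifs <;> first | omega | simp

lemma wedgeIn_witness_notMem_HV (hn : 3 ≤ n) :
    wedgeIn (n - 1) (fun p : Fin (n - 1) => vE n (witnessIndex p)) ∉ HV n := by
  intro hmem
  have heq := wedgeCoord_leftProbe_map_eq_wedgeCoord_rightProbe_map hn hmem
  rw [map_subtype_wedgeIn_witness hn, wedgeCoord_leftProbe_witness hn,
    wedgeCoord_rightProbe_witness hn] at heq
  exact one_ne_zero heq

end Properness

theorem uniqueness_of_symplectic_form (n : ℕ) (hn : 3 ≤ n)
    (ω : ↥(Vsub n) →ₗ[ℝ] ↥(Vsub n) →ₗ[ℝ] ℝ)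
    (hskew : ∀ x y, ω x y = - ω y x)
    (Q : ↥(⋀[ℝ]^(n - 1) ↥(Vsub n)) →ₗ[ℝ] ↥(⋀[ℝ]^(n - 3) ↥(Vsub n)))
    (hQ : ∀ x : Fin (n - 1) → ↥(Vsub n),
      Q (wedgeIn (n - 1) x) =
        ∑ p : Fin (n - 1), ∑ q : Fin (n - 1),
          if p < q then
            ((-1 : ℝ) ^ (p.val + q.val + 1) * ω (x p) (x q)) •
              wedgeIn (n - 3) (fun r : Fin (n - 3) =>
                (((List.ofFn x).eraseIdx q.val).eraseIdx p.val).getD r.val 0)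
          else 0)
    (hker : LinearMap.ker Q = HV n) :
    ∃ a : ℝ, a ≠ 0 ∧
      (∀ i : ℕ, 1 ≤ i → i ≤ 2 * n - 3 → ∀ x y : ↥(Vsub n),
        (x : Fin (2 * n) → ℝ) = vVec n i → (y : Fin (2 * n) → ℝ) = vVec n (i + 1) →
        ω x y = a * (-1 : ℝ) ^ (i + 1)) ∧
      (∀ i j : ℕ, 1 ≤ i → i ≤ 2 * n - 2 → 1 ≤ j → j ≤ 2 * n - 2 →
        ¬ (j = i + 1 ∨ i = j + 1) → ∀ x y : ↥(Vsub n),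
        (x : Fin (2 * n) → ℝ) = vVec n i → (y : Fin (2 * n) → ℝ) = vVec n j →
        ω x y = 0) := by
  have hω : ω.IsAlt := fun x => self_eq_neg.mp (hskew x x)
  have hiso : IsFrameIsotropic ω := fun l hl x hx y hy =>
    hl.form_eq_zero (by omega : n - 1 = n - 3 + 2) hω hQ hker.ge hx hy
  have eq_vE {i : ℕ} (hi : 1 ≤ i) (hin : i + 2 ≤ 2 * n) {x : Vsub n}
      (hx : (x : Fin (2 * n) → ℝ) = vVec n i) : x = vE n i :=
    Subtype.ext (hx.trans (coe_vE hi hin).symm)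
  refine ⟨ω (vE n 1) (vE n 2), fun h₁₂ => ?_, fun i hi hin x y hx hy => ?_,
    fun i j hi hin hj hjn hij x y hx hy => ?_⟩
  · refine wedgeIn_witness_notMem_HV hn
      (hker ▸ IsConvolutionOperator.wedgeIn_mem_ker hQ fun p q => ?_)
    exact hiso.form_vE_eq_zero_of_form_vE_one_two hω h₁₂
      (one_le_witnessIndex p) (witnessIndex_add_two_le hn p)
      (one_le_witnessIndex q) (witnessIndex_add_two_le hn q)
  · rw [eq_vE hi (by omega) hx, eq_vE (by omega) (by omega) hy]
    exact hiso.form_vE_vE_succ hω hi (by omega)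
  · rw [eq_vE hi (by omega) hx, eq_vE hj (by omega) hy]
    exact hiso.form_vE_eq_zero_of_not_adjacent hω hi (by omega) hj (by omega) hij
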